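/- Let γ : ℝ → ℝ² (Euclidean plane) be twice continuously differentiable with ‖γ'(s)‖ = 1 for all s (arc-length parametrization), fix s₀ ∈ ℝ, and assume γ''(s₀) ≠ 0; let ρ = 1/‖γ''(s₀)‖ be the radius of curvature at γ(s₀). Then i² / (2 · dist(γ(s₀ + i), γ(s₀) + i·γ'(s₀))) tends to ρ as i tends to 0 through nonzero values. -/

import Mathlib

open Real Filter
open Asymptotics
open scoped Topology

/-!
Taylor's formula gives `γ (s₀ + i) - (γ s₀ + i • γ' s₀) = (i ^ 2 / 2) • γ'' + o(i ^ 2)`. Hence the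
distance between the two extremities is `i ^ 2 / 2 * ‖γ''‖ + o(i ^ 2)`, and Cauchy's quotient tends
to `1 / ‖γ''‖`.
-/

section Taylor

variable {E : Type*} [NormedAddCommGroup E] [NormedSpace ℝ E] {f f' : ℝ → E} {f'' : E} {x₀ : ℝ}

theorem isLittleO_pow_succ_of_eventually_hasDerivAt {n : ℕ}
    (hf : ∀ᶠ x in 𝓝 x₀, HasDerivAt f (f' x) x) (hf' : f' =o[𝓝 x₀] fun x ↦ (x - x₀) ^ n) :
    (fun x ↦ f x - f x₀) =o[𝓝 x₀] fun x ↦ (x - x₀) ^ (n + 1) := by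
  obtain ⟨ε, hε, hball⟩ := Metric.eventually_nhds_iff_ball.1 hf
  have hnhds : 𝓝[Metric.ball x₀ ε] x₀ = 𝓝 x₀ :=
    nhdsWithin_eq_nhds.2 (Metric.ball_mem_nhds x₀ hε)
  rw [← hnhds] at hf' ⊢
  exact (convex_ball x₀ ε).isLittleO_pow_succ_real (Metric.mem_ball_self hε)
    (fun x hx ↦ (hball x hx).hasDerivWithinAt) hf'

theorem isLittleO_taylor_two
    (hf : ∀ᶠ x in 𝓝 x₀, HasDerivAt f (f' x) x) (hf' : HasDerivAt f' f'' x₀) :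
    (fun x ↦ f x - f x₀ - (x - x₀) • f' x₀ - ((x - x₀) ^ 2 / 2) • f'')
      =o[𝓝 x₀] fun x ↦ (x - x₀) ^ 2 := by
  have hlin (x : ℝ) : HasDerivAt (fun y ↦ (y - x₀) • f' x₀) (f' x₀) x := by
    simpa using ((hasDerivAt_id x).sub_const x₀).smul_const (f' x₀)
  have hquad (x : ℝ) : HasDerivAt (fun y ↦ ((y - x₀) ^ 2 / 2) • f'') ((x - x₀) • f'') x := by
    simpa using ((((hasDerivAt_id x).sub_const x₀).pow 2).div_const 2).smul_const f''
  have hremainder : ∀ᶠ x in 𝓝 x₀,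
      HasDerivAt (fun y ↦ f y - f x₀ - (y - x₀) • f' x₀ - ((y - x₀) ^ 2 / 2) • f'')
        (f' x - f' x₀ - (x - x₀) • f'') x := by
    filter_upwards [hf] with x hx
    exact ((hx.sub_const (f x₀)).sub (hlin x)).sub (hquad x)
  simpa using isLittleO_pow_succ_of_eventually_hasDerivAt (n := 1) hremainder
    (by simpa using hf'.isLittleO)

theorem tendsto_inv_sq_smul_sub_tangent
    (hf : ∀ᶠ x in 𝓝 x₀, HasDerivAt f (f' x) x) (hf' : HasDerivAt f' f'' x₀) :
    Tendsto (fun h : ℝ ↦ (h ^ 2)⁻¹ • (f (x₀ + h) - (f x₀ + h • f' x₀))) (𝓝[≠] 0)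
      (𝓝 ((2 : ℝ)⁻¹ • f'')) := by
  have hshift : Tendsto (fun h ↦ x₀ + h) (𝓝[≠] 0) (𝓝 x₀) :=
    ((continuous_const_add x₀).tendsto' 0 x₀ (add_zero x₀)).mono_left nhdsWithin_le_nhds
  have hremainder :=
    ((isLittleO_taylor_two hf hf').comp_tendsto hshift).tendsto_inv_smul_nhds_zero
  rw [← tendsto_sub_nhds_zero_iff]
  refine hremainder.congr' ?_
  filter_upwards [self_mem_nhdsWithin] with h (hh : h ≠ 0)
  have hscale : (h ^ 2)⁻¹ * (h ^ 2 / 2) = 2⁻¹ := by field_simp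
  simp only [Function.comp_apply, add_sub_cancel_left]
  rw [smul_sub, smul_smul, hscale, sub_sub (f (x₀ + h))]

theorem tendsto_dist_tangent_div_sq
    (hf : ∀ᶠ x in 𝓝 x₀, HasDerivAt f (f' x) x) (hf' : HasDerivAt f' f'' x₀) :
    Tendsto (fun h : ℝ ↦ dist (f (x₀ + h)) (f x₀ + h • f' x₀) / h ^ 2) (𝓝[≠] 0)
      (𝓝 (‖f''‖ / 2)) := by
  simpa [norm_smul, dist_eq_norm, div_eq_inv_mul] using
    (tendsto_inv_sq_smul_sub_tangent hf hf').norm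

end Taylor

theorem cauchy_radius_of_curvature_general {E : Type*} [NormedAddCommGroup E] [NormedSpace ℝ E]
    {γ γ' : ℝ → E} {γ'' : E} {s₀ : ℝ} (hγ : ∀ᶠ s in 𝓝 s₀, HasDerivAt γ (γ' s) s)
    (hγ' : HasDerivAt γ' γ'' s₀) (hγ'' : γ'' ≠ 0) :
    Tendsto (fun i : ℝ ↦ i ^ 2 / (2 * dist (γ (s₀ + i)) (γ s₀ + i • γ' s₀))) (𝓝[≠] 0)
      (𝓝 (1 / ‖γ''‖)) := by
  have hlim := ((tendsto_dist_tangent_div_sq hγ hγ').const_mul 2).inv₀ (by simpa using hγ'')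
  simpa only [← mul_div_assoc, inv_div, mul_div_cancel_left₀ ‖γ''‖ (two_ne_zero' ℝ),
    ← one_div ‖γ''‖] using hlim

theorem cauchy_radius_of_curvature (γ : ℝ → EuclideanSpace ℝ (Fin 2))
    (hγ : ContDiff ℝ 2 γ) (hunit : ∀ s : ℝ, ‖deriv γ s‖ = 1) (s₀ : ℝ)
    (hcurv : deriv (deriv γ) s₀ ≠ 0) :
    Tendsto
      (fun i : ℝ => i ^ 2 / (2 * dist (γ (s₀ + i)) (γ s₀ + i • deriv γ s₀)))
      (nhdsWithin 0 {0}ᶜ) (nhds (1 / ‖deriv (deriv γ) s₀‖)) :=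
  cauchy_radius_of_curvature_general
    (.of_forall fun s ↦ (hγ.differentiable two_ne_zero s).hasDerivAt)
    (hγ.differentiable_deriv_two s₀).hasDerivAt hcurv
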